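/- Suppose T ⊆ 𝔹 satisfies T̃ = T, let 𝔹_𝔭 be an orbit with T_𝔭 ≠ 𝔹_𝔭, and let τ ∈ 𝔹_𝔭 − T_𝔭. Set s = |𝔹_𝔭 − T_𝔭|. The map β ↦ σ̄β := σ^{n_β}β is a permutation of 𝔹_𝔭 − T_𝔭; for 1 ≤ i ≤ s let n_i(τ) be the unique integer with 0 < n_i(τ) ≤ |𝔹_𝔭| and σ̄^iτ = σ^{n_i(τ)}τ. Then for every κ ∈ ℚ^𝔹, writing i_T(κ) = Σ_{β ∈ 𝔹−T} ℓ_β e_β, one has p^{n₁(τ)}·L_{T,τ}(κ) = Σ_{i=1}^{s} p^{n_i(τ)}·ℓ_{σ̄^iτ}. -/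

import Mathlib

/- Setting: `B` is the finite nonempty set 𝔹 equipped with a permutation `σ` (Frobenius),
and `p` is a prime.  Weights live in `ℚ^𝔹 = (B → ℚ)`.  The orbits `𝔹_𝔭` of `σ` are the sets
`orbit σ β`, and for `T ⊆ 𝔹` we have `T_𝔭 = T ∩ orbit σ β`. -/

open scoped Classical

noncomputable section

namespace GO

variable {B : Type*} [Fintype B] [DecidableEq B]

/-- The standard basis vector `e_β` of `ℚ^𝔹`. -/
def e (β : B) : B → ℚ := fun τ => if τ = β then 1 else 0

/-- `β'` lies in the `σ`-orbit of `β`. -/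
def sameOrbit (σ : Equiv.Perm B) (β β' : B) : Prop := ∃ n : ℕ, (σ ^ n) β = β'

/-- The `σ`-orbit `𝔹_𝔭` of `β`. -/
def orbit (σ : Equiv.Perm B) (β : B) : Set B := {τ | sameOrbit σ β τ}

/-- `|𝔹_𝔭|`, the cardinality of the orbit of `β`. -/
def orbitCard (σ : Equiv.Perm B) (β : B) : ℕ := (orbit σ β).ncard

/-- For `β`, `β'` in the same orbit: the unique `n` with `0 < n ≤ |𝔹_𝔭|` and `σ^n β' = β`,
realized as the least positive `n` with `σ^n β' = β`. -/
def steps (σ : Equiv.Perm B) (β' β : B) : ℕ := sInf {n : ℕ | 0 < n ∧ (σ ^ n) β' = β}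

/-- For `β`, `β'` in the same orbit: the unique `n` with `0 ≤ n < |𝔹_𝔭|` and `σ^n β = β'`. -/
def steps0 (σ : Equiv.Perm B) (β β' : B) : ℕ := sInf {n : ℕ | (σ ^ n) β = β'}

/-- `h_β^{β'} = -e_β + p^n e_{β'}` where `β = σ^n β'` with `0 < n ≤ |𝔹_𝔭|`. -/
def hvec (σ : Equiv.Perm B) (p : ℕ) (β β' : B) : B → ℚ :=
  -(e β) + ((p : ℚ) ^ steps σ β' β) • e β'

/-- `b_β^{β'} = e_β + p^n e_{β'}` where `β = σ^n β'` with `0 < n ≤ |𝔹_𝔭|`. -/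
def bvec (σ : Equiv.Perm B) (p : ℕ) (β β' : B) : B → ℚ :=
  (e β) + ((p : ℚ) ^ steps σ β' β) • e β'

/-- `h_β = -e_β + p e_{σ⁻¹ β}`. -/
def hsimple (σ : Equiv.Perm B) (p : ℕ) (β : B) : B → ℚ := -(e β) + (p : ℚ) • e (σ⁻¹ β)

/-- `b_β = e_β + p e_{σ⁻¹ β}`. -/
def bsimple (σ : Equiv.Perm B) (p : ℕ) (β : B) : B → ℚ := (e β) + (p : ℚ) • e (σ⁻¹ β)

/-- The `ℚ^{≥0}`-cone generated by a set `S` of vectors: all finite nonnegative rational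
linear combinations of elements of `S`. -/
def cone {V : Type*} [AddCommMonoid V] [Module ℚ V] (S : Set V) : Set V :=
  {x | ∃ (n : ℕ) (c : Fin n → ℚ) (v : Fin n → V),
    (∀ i, 0 ≤ c i) ∧ (∀ i, v i ∈ S) ∧ x = ∑ i, c i • v i}

/-- A chain in `T` (automatically contained in a single orbit, so this is the notion of a
chain in `T_𝔭` for `T_𝔭 ⊊ 𝔹_𝔭`): `C = {σ^{-i}β : 0 ≤ i ≤ m} ⊆ T` with `σβ ∉ T` and
`σ^{-m-1}β ∉ T`. -/
def IsChainIn (σ : Equiv.Perm B) (T : Set B) (C : Set B) : Prop :=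
  ∃ (β : B) (m : ℕ), σ β ∉ T ∧ (σ⁻¹ ^ (m + 1)) β ∉ T ∧
    (∀ i ≤ m, (σ⁻¹ ^ i) β ∈ T) ∧ C = {τ | ∃ i ≤ m, τ = (σ⁻¹ ^ i) β}

/-- `C̃` for a chain `C`: equals `C` if `m` is odd (i.e. `|C| = m+1` is even), and
`C ∪ {σ^{-m-1}β} = C ∪ σ⁻¹(C)` if `m` is even (i.e. `|C|` odd). -/
def chainExt (σ : Equiv.Perm B) (C : Set B) : Set B :=
  if Odd C.ncard then C ∪ (⇑σ⁻¹ '' C) else C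

/-- `T̃ = ⋃_𝔭 T̃_𝔭`: the union of `T` with the extensions `C̃` of all chains `C` in `T`.
(For orbits with `T_𝔭 = 𝔹_𝔭` there are no chains and `T̃_𝔭 = 𝔹_𝔭 = T_𝔭`.) -/
def tilde (σ : Equiv.Perm B) (T : Set B) : Set B :=
  T ∪ ⋃ (C : Set B) (_ : IsChainIn σ T C), chainExt σ C

/-- `μ_β`: the least `i > 0` with `σ^i β ∉ T` if `T_𝔭 ≠ 𝔹_𝔭`, and `0` if `T_𝔭 = 𝔹_𝔭`. -/
def mu (σ : Equiv.Perm B) (T : Set B) (β : B) : ℕ :=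
  if orbit σ β ⊆ T then 0 else sInf {i : ℕ | 0 < i ∧ (σ ^ i) β ∉ T}

/-- `n_β`: the least `i > 0` with `σ^i β ∉ T̃` (meaningful when `T̃_𝔭 ≠ 𝔹_𝔭`). -/
def nn (σ : Equiv.Perm B) (T : Set B) (β : B) : ℕ :=
  sInf {i : ℕ | 0 < i ∧ (σ ^ i) β ∉ tilde σ T}

/-- `ν_β`: the least `i ≥ 0` with `σ^{-i} β ∉ T` (meaningful when `T_𝔭 ≠ 𝔹_𝔭`). -/
def nu (σ : Equiv.Perm B) (T : Set B) (β : B) : ℕ :=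
  sInf {i : ℕ | (σ⁻¹ ^ i) β ∉ T}

/-- `𝒯(T_𝔭) = (𝔹_𝔭 − T̃_𝔭) ∪ σ(T̃_𝔭 − T_𝔭)`, taken globally (union over all `𝔭`). -/
def Tscr (σ : Equiv.Perm B) (T : Set B) : Set B :=
  (tilde σ T)ᶜ ∪ (⇑σ '' (tilde σ T \ T))

/-- The generating set `⋃_𝔭 𝒢(T_𝔭)`:
`{h_β^{β'} : β ∈ ℋ(T_𝔭), β' ∈ 𝒯(T_𝔭)} ∪ {±b_β : β ∈ T_𝔭}` over all `𝔭`. -/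
def Dgen (σ : Equiv.Perm B) (p : ℕ) (T : Set B) : Set (B → ℚ) :=
  {v | ∃ β β', β ∉ T ∧ β' ∈ Tscr σ T ∧ sameOrbit σ β β' ∧ v = hvec σ p β β'}
  ∪ {v | ∃ β ∈ T, v = bsimple σ p β ∨ v = -(bsimple σ p β)}

/-- The cone `𝒟_T`. -/
def D (σ : Equiv.Perm B) (p : ℕ) (T : Set B) : Set (B → ℚ) := cone (Dgen σ p T)

/-- `h_{σ^{n_β}β}^{β} = -e_{σ^{n_β}β} + p^{n_β} e_β`. -/
def fH (σ : Equiv.Perm B) (p : ℕ) (T : Set B) (β : B) : B → ℚ :=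
  -(e ((σ ^ nn σ T β) β)) + ((p : ℚ) ^ nn σ T β) • e β

/-- `b_{σ^{n_β}β}^{β} = e_{σ^{n_β}β} + p^{n_β} e_β`. -/
def fB (σ : Equiv.Perm B) (p : ℕ) (T : Set B) (β : B) : B → ℚ :=
  (e ((σ ^ nn σ T β) β)) + ((p : ℚ) ^ nn σ T β) • e β

/-- The generating set `⋃_𝔭 𝒢′(T_𝔭)`:
if `𝔹_𝔭 − T̃_𝔭 ≠ ∅` it is `{h_{σ^{n_β}β}^β : β ∈ 𝔹_𝔭 − T̃_𝔭} ∪ {−b_{σ^{n_β}β}^β : β ∈ T̃_𝔭 − T_𝔭}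
∪ {±b_β : β ∈ T_𝔭}`, and if `𝔹_𝔭 = T̃_𝔭` it is `{−e_β : β ∈ 𝔹_𝔭 − T_𝔭} ∪ {±b_β : β ∈ T_𝔭}`. -/
def D'gen (σ : Equiv.Perm B) (p : ℕ) (T : Set B) : Set (B → ℚ) :=
  {v | ∃ β, β ∉ tilde σ T ∧ v = fH σ p T β}
  ∪ {v | ∃ β, β ∈ tilde σ T ∧ β ∉ T ∧ ¬ orbit σ β ⊆ tilde σ T ∧ v = -(fB σ p T β)}
  ∪ {v | ∃ β, β ∉ T ∧ orbit σ β ⊆ tilde σ T ∧ v = -(e β)}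
  ∪ {v | ∃ β ∈ T, v = bsimple σ p β ∨ v = -(bsimple σ p β)}

/-- The cone `𝒟′_T`. -/
def D' (σ : Equiv.Perm B) (p : ℕ) (T : Set B) : Set (B → ℚ) := cone (D'gen σ p T)

/-- `f_β(T)` for `β ∉ T`: `h_{σ^{n_β}β}^β` if `β ∈ 𝔹_𝔭 − T̃_𝔭`; `−b_{σ^{n_β}β}^β` if
`β ∈ T̃_𝔭 − T_𝔭` and `𝔹_𝔭 ≠ T̃_𝔭`; and `−(1+p^{|𝔹_𝔭|}) e_β` if `𝔹_𝔭 = T̃_𝔭`. -/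
def fvec (σ : Equiv.Perm B) (p : ℕ) (T : Set B) (β : B) : B → ℚ :=
  if orbit σ β ⊆ tilde σ T then -((1 + (p : ℚ) ^ orbitCard σ β) • e β)
  else if β ∈ tilde σ T then -(fB σ p T β) else fH σ p T β

/-- `𝔹(T) = ⋃_𝔭 𝔹_𝔭(T)`: `β ∈ 𝔹(T)` iff `β ∉ T`, the set `𝔹_𝔭 − T̃_𝔭` is nonempty, and
`𝔹_𝔭 − T̃_𝔭 ≠ {β}` (this encodes all three cases of the definition of `𝔹_𝔭(T)`). -/
def BT (σ : Equiv.Perm B) (T : Set B) : Set B :=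
  {β | β ∉ T ∧ (orbit σ β \ tilde σ T).Nonempty ∧ orbit σ β \ tilde σ T ≠ {β}}

/-- The sign function `ε_T : 𝔹 → {−1,0,1}`. -/
def epsT (σ : Equiv.Perm B) (T : Set B) (β : B) : ℚ :=
  if orbit σ β ⊆ T then 0
  else if β ∈ tilde σ T then (-1 : ℚ) ^ (mu σ T β - 1) else 1

/-- `L^ε[β, β'](κ) = Σ_{0 ≤ i ≤ n} ε(σ^iβ) p^i k_{σ^iβ}`, where `β' = σ^n β` with
`0 ≤ n < |𝔹_𝔭|`. -/
def Lfun (σ : Equiv.Perm B) (p : ℕ) (ε : B → ℚ) (β β' : B) (κ : B → ℚ) : ℚ :=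
  ∑ i ∈ Finset.range (steps0 σ β β' + 1), ε ((σ ^ i) β) * (p : ℚ) ^ i * κ ((σ ^ i) β)

/-- `L^ε[β] = L^ε[β, σ⁻¹β]`. -/
def Lfun1 (σ : Equiv.Perm B) (p : ℕ) (ε : B → ℚ) (β : B) (κ : B → ℚ) : ℚ :=
  Lfun σ p ε β (σ⁻¹ β) κ

/-- `L_{T,β}` for `β ∈ 𝔹 − T`: `L^{ε_T}[σ^{μ_β}β]` if `β ∈ 𝔹 − T̃`, and
`L^{ε_T}[β, σ^{μ_β−1}β]` if `β ∈ T̃ − T`. -/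
def LT (σ : Equiv.Perm B) (p : ℕ) (T : Set B) (β : B) (κ : B → ℚ) : ℚ :=
  if β ∈ tilde σ T then Lfun σ p (epsT σ T) β ((σ ^ (mu σ T β - 1)) β) κ
  else Lfun1 σ p (epsT σ T) ((σ ^ mu σ T β) β) κ

/-- `ε_{T,f_β}`: negates `ε_T` on `{β, σβ, …, σ^{μ_β−1}β}`. -/
def epsTf (σ : Equiv.Perm B) (T : Set B) (β τ : B) : ℚ :=
  if ∃ i < mu σ T β, τ = (σ ^ i) β then -(epsT σ T τ) else epsT σ T τ

/-- `L_{T,f_β,τ}` for `β ∈ 𝔹(T)` and `τ ∈ 𝔹 − (T ∪ {σ^{n_β}β})`, with `β′ = σ^{n_β}β` and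
`β̃ = σ^{μ_{β′}}β′`. -/
def LTf (σ : Equiv.Perm B) (p : ℕ) (T : Set B) (β τ : B) (κ : B → ℚ) : ℚ :=
  if τ = β then
    (if β ∈ tilde σ T then
      Lfun1 σ p (epsTf σ T β) ((σ ^ mu σ T ((σ ^ nn σ T β) β)) ((σ ^ nn σ T β) β)) κ
    else
      Lfun σ p (epsTf σ T β) β (σ⁻¹ ((σ ^ mu σ T ((σ ^ nn σ T β) β)) ((σ ^ nn σ T β) β))) κ)
  else
    (if τ ∈ tilde σ T then LT σ p T τ κ
     else Lfun1 σ p (epsTf σ T β) ((σ ^ mu σ T τ) τ) κ)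

/-- `𝒟_{T,f_β} = {κ : L_{T,f_β,τ}(κ) ≥ 0 for all τ ∈ 𝔹 − (T ∪ {σ^{n_β}β})}`. -/
def Df (σ : Equiv.Perm B) (p : ℕ) (T : Set B) (β : B) : Set (B → ℚ) :=
  {κ | ∀ τ, τ ∉ T → τ ≠ (σ ^ nn σ T β) β → 0 ≤ LTf σ p T β τ κ}

/-- `i_T : ℚ^𝔹 → ℚ^{𝔹−T}`, the linear map with `i_T(e_β) = 0` if `T_𝔭 = 𝔹_𝔭` and
`i_T(e_β) = (−p)^{ν_β} e_{σ^{−ν_β}β}` otherwise. -/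
def iT (σ : Equiv.Perm B) (p : ℕ) (T : Set B) (κ : B → ℚ) : {β : B // β ∉ T} → ℚ :=
  fun β₀ => ∑ β : B, κ β *
    (if orbit σ β ⊆ T then 0
     else if (σ⁻¹ ^ nu σ T β) β = β₀.1 then (-(p : ℚ)) ^ nu σ T β else 0)

/-- Restriction to `ℚ^{𝔹−T}` of a vector of `ℚ^𝔹` (used for vectors supported on `𝔹 − T`). -/
def res (T : Set B) (v : B → ℚ) : {β : B // β ∉ T} → ℚ := fun β => v β.1

/-- The generating set `𝒢^{T-red}(T) = ⋃_𝔭 𝒢_𝔭^{T-red}(T)` of the reduced cone. -/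
def Gred (σ : Equiv.Perm B) (p : ℕ) (T : Set B) : Set ({β : B // β ∉ T} → ℚ) :=
  {v | ∃ β, β ∉ tilde σ T ∧ v = res T (fH σ p T β)}
  ∪ {v | ∃ β, β ∈ tilde σ T ∧ β ∉ T ∧ ¬ orbit σ β ⊆ tilde σ T ∧ v = res T (-(fB σ p T β))}
  ∪ {v | ∃ β, β ∉ T ∧ orbit σ β ⊆ tilde σ T ∧ v = res T (-(e β))}

/-- The minimal cone `𝒞^min_T = i_T(𝒟_T ∩ ⋂_{β ∈ 𝔹(T)} 𝒟_{T,f_β}) ⊆ ℚ^{𝔹−T}`. -/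
def Cmin (σ : Equiv.Perm B) (p : ℕ) (T : Set B) : Set ({β : B // β ∉ T} → ℚ) :=
  iT σ p T '' (D σ p T ∩ {κ | ∀ β ∈ BT σ T, κ ∈ Df σ p T β})

/-- `g_β`: `b_β` if `β ∈ T_𝔭`; `−e_β` if `β ∈ T̃_𝔭 − T_𝔭` and `𝔹_𝔭 = T̃_𝔭`;
`−b_{σ^{n_β}β}^β` if `β ∈ T̃_𝔭 − T_𝔭` and `𝔹_𝔭 ≠ T̃_𝔭`; `h_{σ^{n_β}β}^β` if `β ∈ 𝔹_𝔭 − T̃_𝔭`. -/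
def gvec (σ : Equiv.Perm B) (p : ℕ) (T : Set B) (β : B) : B → ℚ :=
  if β ∈ T then bsimple σ p β
  else if orbit σ β ⊆ tilde σ T then -(e β)
  else if β ∈ tilde σ T then -(fB σ p T β)
  else fH σ p T β

/-- The map `σ̄ : β ↦ σ^{n_β} β`. -/
def sigbar (σ : Equiv.Perm B) (T : Set B) (β : B) : B := (σ ^ nn σ T β) β

/-- `h_β = -e_β + p e_{σ⁻¹β}` as an element of `ℤ^𝔹`. -/
def hZ (σ : Equiv.Perm B) (p : ℕ) (β : B) : B → ℤ :=
  fun τ => (if τ = β then -1 else 0) + (if τ = σ⁻¹ β then (p : ℤ) else 0)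

end GO

end

/-!
Cut the orbit of `τ` into blocks `β, σβ, …, σ^{n_β-1}β`, one for each `β ∉ T`. The coordinate of
`i_T(κ)` at `β` only involves the block of `β`, so both sides are sums over the points `γ` of the
orbit, and the coefficients of `k_γ` can be compared one at a time.

* Powers of `p`: going from `τ` to the start of the block of `γ` and then on to `γ`, or going
  first to `σ̄τ` and then on to `γ`, takes the same number of steps: in both cases it is the least
  `m ≥ n_τ` with `σ^m τ = γ`.
* Signs: as `T̃ = T`, all chains in `T` have even length, so all blocks have odd length. Hence
  counting from the start of the block (`ν_γ`) or towards its end (`μ_γ - 1`) gives the same sign.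
-/

namespace GO

section PeriodicOrbit

variable {α M : Type*} [AddCommMonoid M] {f : α → α} {x : α} {s : Finset α}

theorem bijOn_iterate_Iio_minimalPeriod (hx : x ∈ Function.periodicPts f) :
    Set.BijOn (fun n => f^[n] x) (Set.Iio (Function.minimalPeriod f x))
      (Set.range fun n => f^[n] x) := by
  refine ⟨fun n _ => ⟨n, rfl⟩, Function.iterate_injOn_Iio_minimalPeriod, ?_⟩
  rintro _ ⟨n, rfl⟩
  exact ⟨n % Function.minimalPeriod f x,
    Nat.mod_lt n (Function.minimalPeriod_pos_of_mem_periodicPts hx),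
    Function.iterate_mod_minimalPeriod_eq⟩

theorem sum_range_minimalPeriod_iterate (hx : x ∈ Function.periodicPts f)
    (hs : (s : Set α) = Set.range fun n => f^[n] x) (g : α → M) :
    ∑ n ∈ Finset.range (Function.minimalPeriod f x), g (f^[n] x) = ∑ y ∈ s, g y := by
  have hbij := bijOn_iterate_Iio_minimalPeriod hx
  rw [← hs, ← Finset.coe_range] at hbij
  exact Finset.sum_nbij _ hbij.mapsTo hbij.injOn hbij.surjOn fun _ _ => rfl

theorem sum_Icc_card_iterate (hx : x ∈ Function.periodicPts f)
    (hs : (s : Set α) = Set.range fun n => f^[n] x) (g : α → M) :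
    ∑ n ∈ Finset.Icc 1 s.card, g (f^[n] x) = ∑ y ∈ s, g y := by
  have hcard : Function.minimalPeriod f x = s.card := by
    simpa using sum_range_minimalPeriod_iterate hx hs fun _ => (1 : ℕ)
  obtain ⟨d, hd⟩ := Nat.exists_eq_add_one_of_ne_zero
    (Function.minimalPeriod_pos_of_mem_periodicPts hx).ne'
  have hreturn : f^[d + 1] x = f^[0] x := hd ▸ Function.iterate_minimalPeriod
  rw [← sum_range_minimalPeriod_iterate hx hs, ← hcard, hd, Finset.sum_range_succ', ← hreturn,
    ← Finset.sum_range_succ fun n => g (f^[n + 1] x), Finset.range_eq_Ico,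
    Finset.sum_Ico_add' fun n => g (f^[n] x)]
  rfl

end PeriodicOrbit

variable {B : Type*} {σ : Equiv.Perm B} {T : Set B} {β γ δ τ : B}

section Orbit

theorem mem_orbit_self : β ∈ orbit σ β :=
  ⟨0, rfl⟩

theorem not_orbit_subset_of_notMem (hβ : β ∉ T) : ¬ orbit σ β ⊆ T :=
  fun hsub => hβ (hsub mem_orbit_self)

variable [Finite B]

theorem mem_orbit_iff_sameCycle : γ ∈ orbit σ β ↔ σ.SameCycle β γ :=
  ⟨fun ⟨n, hn⟩ => ⟨n, by simpa using hn⟩, Equiv.Perm.SameCycle.exists_nat_pow_eq⟩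

theorem mem_orbit_symm (h : γ ∈ orbit σ β) : β ∈ orbit σ γ :=
  mem_orbit_iff_sameCycle.2 (mem_orbit_iff_sameCycle.1 h).symm

theorem orbit_eq_of_mem (h : γ ∈ orbit σ β) : orbit σ γ = orbit σ β := by
  ext δ
  simp only [mem_orbit_iff_sameCycle] at h ⊢
  exact ⟨h.trans, h.symm.trans⟩

theorem exists_pos_pow_eq_of_mem_orbit (h : γ ∈ orbit σ β) : ∃ n, 0 < n ∧ (σ ^ n) β = γ :=
  let ⟨n, hpos, _, hn⟩ := (mem_orbit_iff_sameCycle.1 h).exists_pow_eq''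
  ⟨n, hpos, hn⟩

theorem isLeast_steps (h : γ ∈ orbit σ β) :
    IsLeast {n | 0 < n ∧ (σ ^ n) β = γ} (steps σ β γ) :=
  isLeast_csInf (exists_pos_pow_eq_of_mem_orbit h)

end Orbit

theorem isLeast_steps0 (h : γ ∈ orbit σ β) : IsLeast {n | (σ ^ n) β = γ} (steps0 σ β γ) :=
  isLeast_csInf h

theorem inv_pow_apply_pow_apply {i n : ℕ} (h : i ≤ n) :
    (σ⁻¹ ^ i) ((σ ^ n) β) = (σ ^ (n - i)) β := by
  rw [inv_pow, Equiv.Perm.inv_eq_iff_eq, ← Equiv.Perm.mul_apply, ← pow_add, Nat.add_sub_cancel' h]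

theorem isLeast_add_steps0 (n : ℕ) (h : γ ∈ orbit σ ((σ ^ n) β)) :
    IsLeast {m | n ≤ m ∧ (σ ^ m) β = γ} (n + steps0 σ ((σ ^ n) β) γ) := by
  have hleast := isLeast_steps0 h
  refine ⟨⟨Nat.le_add_right _ _, ?_⟩, ?_⟩
  · rw [add_comm, pow_add, Equiv.Perm.mul_apply]
    exact hleast.1
  · rintro m ⟨hnm, hm⟩
    obtain ⟨k, rfl⟩ := Nat.exists_eq_add_of_le' hnm
    rw [pow_add, Equiv.Perm.mul_apply] at hm
    have := hleast.2 hm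
    lia

theorem steps0_pow_apply {i : ℕ} (hi : i < Function.minimalPeriod σ β) :
    steps0 σ β ((σ ^ i) β) = i := by
  have hleast := isLeast_steps0 (σ := σ) (β := β) ⟨i, rfl⟩
  refine Function.iterate_injOn_Iio_minimalPeriod ((hleast.2 rfl).trans_lt hi) hi ?_
  simp only [Equiv.Perm.iterate_eq_pow]
  exact hleast.1

section ReturnMap

theorem subset_tilde : T ⊆ tilde σ T :=
  Set.subset_union_left

theorem pow_apply_mem_tilde_of_lt_nn {i : ℕ} (hi : 0 < i) (hlt : i < nn σ T β) :
    (σ ^ i) β ∈ tilde σ T :=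
  not_not.1 fun h => Nat.notMem_of_lt_sInf hlt ⟨hi, h⟩

theorem nn_le_of_pow_apply_notMem {n : ℕ} (hn : 0 < n) (h : (σ ^ n) β ∉ tilde σ T) :
    nn σ T β ≤ n :=
  Nat.sInf_le ⟨hn, h⟩

theorem sigbar_mem_orbit : sigbar σ T β ∈ orbit σ β :=
  ⟨_, rfl⟩

variable [Finite B]

theorem isLeast_nn (h : ¬ orbit σ β ⊆ tilde σ T) :
    IsLeast {n | 0 < n ∧ (σ ^ n) β ∉ tilde σ T} (nn σ T β) := by
  obtain ⟨γ, hγ, hγT⟩ := Set.not_subset.1 h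
  obtain ⟨n, hpos, rfl⟩ := exists_pos_pow_eq_of_mem_orbit hγ
  exact isLeast_csInf ⟨n, hpos, hγT⟩

theorem nn_pos (h : ¬ orbit σ β ⊆ tilde σ T) : 0 < nn σ T β :=
  (isLeast_nn h).1.1

theorem sigbar_notMem_tilde (h : ¬ orbit σ β ⊆ tilde σ T) : sigbar σ T β ∉ tilde σ T :=
  (isLeast_nn h).1.2

theorem nn_le_steps (hγ : γ ∈ orbit σ β) (hγT : γ ∉ tilde σ T) : nn σ T β ≤ steps σ β γ := by
  obtain ⟨hpos, hsteps⟩ := (isLeast_steps hγ).1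
  exact nn_le_of_pow_apply_notMem hpos (hsteps.symm ▸ hγT)

theorem steps_sigbar (h : ¬ orbit σ β ⊆ tilde σ T) : steps σ β (sigbar σ T β) = nn σ T β :=
  le_antisymm ((isLeast_steps sigbar_mem_orbit).2 ⟨nn_pos h, rfl⟩)
    (nn_le_steps sigbar_mem_orbit (sigbar_notMem_tilde h))

theorem nn_le_minimalPeriod (hβ : β ∉ tilde σ T) : nn σ T β ≤ Function.minimalPeriod σ β := by
  refine nn_le_of_pow_apply_notMem (Function.minimalPeriod_pos_of_mem_periodicPts
    (σ.injective.mem_periodicPts β)) ?_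
  rwa [← Equiv.Perm.iterate_eq_pow, Function.iterate_minimalPeriod]

theorem exists_pos_iterate_sigbar_eq (hβ : β ∉ tilde σ T) (hγ : γ ∉ tilde σ T) {k : ℕ}
    (hk : 0 < k) (h : (σ ^ k) β = γ) : ∃ i, 0 < i ∧ (sigbar σ T)^[i] β = γ := by
  induction k using Nat.strong_induction_on generalizing β with
  | _ k ih =>
    have horbit := not_orbit_subset_of_notMem (σ := σ) hβ
    have hle : nn σ T β ≤ k := nn_le_of_pow_apply_notMem hk (h ▸ hγ)
    rcases hle.eq_or_lt with heq | hlt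
    · exact ⟨1, one_pos, by rw [← h, ← heq]; rfl⟩
    · have hrest : (σ ^ (k - nn σ T β)) (sigbar σ T β) = γ := by
        rw [sigbar, ← Equiv.Perm.mul_apply, ← pow_add, Nat.sub_add_cancel hle, h]
      obtain ⟨i, -, hi⟩ := ih _ (Nat.sub_lt hk (nn_pos horbit)) (sigbar_notMem_tilde horbit)
        (Nat.sub_pos_of_lt hlt) hrest
      exact ⟨i + 1, i.succ_pos, hi⟩

theorem mem_periodicPts_sigbar (hβ : β ∉ tilde σ T) : β ∈ Function.periodicPts (sigbar σ T) :=
  let ⟨_, hpos, hk⟩ := exists_pos_pow_eq_of_mem_orbit (σ := σ) (mem_orbit_self (β := β))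
  exists_pos_iterate_sigbar_eq hβ hβ hpos hk

theorem mapsTo_sigbar :
    Set.MapsTo (sigbar σ T) (orbit σ τ \ tilde σ T) (orbit σ τ \ tilde σ T) :=
  fun _ hβ => ⟨orbit_eq_of_mem hβ.1 ▸ sigbar_mem_orbit,
    sigbar_notMem_tilde (not_orbit_subset_of_notMem hβ.2)⟩

theorem bijOn_sigbar :
    Set.BijOn (sigbar σ T) (orbit σ τ \ tilde σ T) (orbit σ τ \ tilde σ T) :=
  (Set.Finite.injOn_iff_bijOn_of_mapsTo (Set.toFinite _) mapsTo_sigbar).1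
    ((Function.bijOn_periodicPts _).injOn.mono fun _ hβ => mem_periodicPts_sigbar hβ.2)

theorem orbit_diff_tilde_eq_range_iterate_sigbar (hτ : τ ∉ tilde σ T) :
    orbit σ τ \ tilde σ T = Set.range fun n => (sigbar σ T)^[n] τ := by
  ext β
  constructor
  · rintro ⟨hβ, hβT⟩
    obtain ⟨k, hpos, hk⟩ := exists_pos_pow_eq_of_mem_orbit hβ
    obtain ⟨i, -, hi⟩ := exists_pos_iterate_sigbar_eq hτ hβT hpos hk
    exact ⟨i, hi⟩
  · rintro ⟨n, rfl⟩
    exact mapsTo_sigbar.iterate n ⟨mem_orbit_self, hτ⟩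

end ReturnMap

theorem sum_Icc_ncard_iterate_sigbar [Fintype B] {M : Type*} [AddCommMonoid M]
    (hτ : τ ∉ tilde σ T) (g : B → M) :
    ∑ i ∈ Finset.Icc 1 (orbit σ τ \ tilde σ T).ncard, g ((sigbar σ T)^[i] τ) =
      ∑ β ∈ (orbit σ τ \ tilde σ T).toFinset, g β := by
  rw [Set.ncard_eq_toFinset_card']
  refine sum_Icc_card_iterate (mem_periodicPts_sigbar hτ) ?_ g
  rw [Set.coe_toFinset, orbit_diff_tilde_eq_range_iterate_sigbar hτ]

section Foot

/-- The start of the block of `β`: the last element outside `T` that one meets at or before `β`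
when going backwards along the orbit. Thus `i_T(e_β) = (-p)^{ν_β} e_{foot β}`. If the orbit of `β`
lies in `T` there is no such element, and the value is `β`. -/
noncomputable def foot (σ : Equiv.Perm B) (T : Set B) (β : B) : B :=
  (σ⁻¹ ^ nu σ T β) β

theorem pow_nu_apply_foot : (σ ^ nu σ T β) (foot σ T β) = β := by
  rw [foot, inv_pow, ← Equiv.Perm.mul_apply, mul_inv_cancel, Equiv.Perm.one_apply]

theorem pow_sub_nu_apply_eq_foot {m : ℕ} (hm : nu σ T γ ≤ m) (h : (σ ^ m) β = γ) :
    (σ ^ (m - nu σ T γ)) β = foot σ T γ := by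
  rw [foot, inv_pow, Equiv.Perm.eq_inv_iff_eq, ← Equiv.Perm.mul_apply, ← pow_add,
    Nat.add_sub_cancel' hm, h]

theorem nu_le_of_pow_apply_eq {k : ℕ} (hδ : δ ∉ T) (h : (σ ^ k) δ = γ) : nu σ T γ ≤ k := by
  refine Nat.sInf_le (?_ : (σ⁻¹ ^ k) γ ∉ T)
  rwa [← h, inv_pow_apply_pow_apply le_rfl, Nat.sub_self]

theorem mem_orbit_foot : β ∈ orbit σ (foot σ T β) :=
  ⟨_, pow_nu_apply_foot⟩

variable [Finite B]

theorem foot_mem_orbit : foot σ T β ∈ orbit σ β :=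
  mem_orbit_symm mem_orbit_foot

theorem foot_notMem (h : ¬ orbit σ β ⊆ T) : foot σ T β ∉ T := by
  obtain ⟨δ, hδ, hδT⟩ := Set.not_subset.1 h
  obtain ⟨n, rfl⟩ := mem_orbit_symm hδ
  have hmem : (σ⁻¹ ^ n) ((σ ^ n) δ) ∉ T := by
    rwa [inv_pow_apply_pow_apply le_rfl, Nat.sub_self]
  exact Nat.sInf_mem (s := {i | (σ⁻¹ ^ i) ((σ ^ n) δ) ∉ T}) ⟨n, hmem⟩

theorem nn_foot (h : ¬ orbit σ β ⊆ tilde σ T) : nn σ T (foot σ T β) = nu σ T β + nn σ T β := by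
  have hfoot : ¬ orbit σ (foot σ T β) ⊆ tilde σ T := by
    rwa [orbit_eq_of_mem foot_mem_orbit]
  have hshift (i : ℕ) : (σ ^ (nu σ T β + i)) (foot σ T β) = (σ ^ i) β := by
    rw [add_comm, pow_add, Equiv.Perm.mul_apply, pow_nu_apply_foot]
  refine (isLeast_nn hfoot).unique ⟨⟨Nat.add_pos_right _ (nn_pos h), ?_⟩, ?_⟩
  · rw [hshift]
    exact sigbar_notMem_tilde h
  · rintro i ⟨hi, hiT⟩
    rcases le_or_gt i (nu σ T β) with hle | hlt
    · have hback : (σ ^ (nu σ T β - i)) ((σ ^ i) (foot σ T β)) = β := by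
        rw [← Equiv.Perm.mul_apply, ← pow_add, Nat.sub_add_cancel hle, pow_nu_apply_foot]
      have := nu_le_of_pow_apply_eq (fun hmem => hiT (subset_tilde hmem)) hback
      lia
    · obtain ⟨j, rfl⟩ := Nat.exists_eq_add_of_lt hlt
      rw [add_assoc, hshift] at hiT
      have := nn_le_of_pow_apply_notMem j.succ_pos hiT
      lia

end Foot

section Chain

theorem image_inv_subset_tilde_of_odd_ncard {C : Set B} (hC : IsChainIn σ T C)
    (hodd : Odd C.ncard) : ⇑σ⁻¹ '' C ⊆ tilde σ T := by
  have hsub : chainExt σ C ⊆ tilde σ T :=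
    (Set.subset_iUnion₂ (s := fun C (_ : IsChainIn σ T C) => chainExt σ C) C hC).trans
      Set.subset_union_right
  rw [chainExt, if_pos hodd] at hsub
  exact Set.subset_union_right.trans hsub

theorem isChainIn_pow_image_Ioo {n : ℕ} (hn : 2 ≤ n) (hβ : β ∉ T)
    (hmem : ∀ i ∈ Set.Ioo 0 n, (σ ^ i) β ∈ T) (hend : (σ ^ n) β ∉ T) :
    IsChainIn σ T ((fun i => (σ ^ i) β) '' Set.Ioo 0 n) := by
  obtain ⟨m, rfl⟩ := Nat.exists_eq_add_of_le' hn
  have hinv {i : ℕ} (hi : i ≤ m + 1) := inv_pow_apply_pow_apply (σ := σ) (β := β) hi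
  refine ⟨(σ ^ (m + 1)) β, m, ?_, ?_, fun i hi => ?_, ?_⟩
  · rwa [← Equiv.Perm.mul_apply, ← pow_succ']
  · rwa [hinv le_rfl, Nat.sub_self]
  · rw [hinv (by lia)]
    exact hmem _ ⟨by lia, by lia⟩
  · ext γ
    constructor
    · rintro ⟨i, ⟨hpos, hlt⟩, rfl⟩
      exact ⟨m + 1 - i, by lia, by rw [hinv (by lia), Nat.sub_sub_self (by lia)]⟩
    · rintro ⟨i, hi, rfl⟩
      exact ⟨m + 1 - i, ⟨by lia, by lia⟩, (hinv (by lia)).symm⟩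

end Chain

section TildeEqSelf

theorem mu_eq_nn (hT : tilde σ T = T) (h : ¬ orbit σ β ⊆ T) : mu σ T β = nn σ T β := by
  rw [mu, if_neg h, nn, hT]

variable [Finite B]

theorem isLeast_nu_add_steps_foot (hT : tilde σ T = T) (h : ¬ orbit σ τ ⊆ T)
    (hγ : γ ∈ orbit σ τ) :
    IsLeast {m | nn σ T τ ≤ m ∧ (σ ^ m) τ = γ} (nu σ T γ + steps σ τ (foot σ T γ)) := by
  have hfoot : foot σ T γ ∈ orbit σ τ := orbit_eq_of_mem hγ ▸ foot_mem_orbit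
  have hfootT : foot σ T γ ∉ tilde σ T := by
    rw [hT]
    exact foot_notMem (orbit_eq_of_mem hγ ▸ h)
  have horbit : ¬ orbit σ τ ⊆ tilde σ T := hT.symm ▸ h
  have hsteps := isLeast_steps hfoot
  refine ⟨⟨(nn_le_steps hfoot hfootT).trans (Nat.le_add_left _ _), ?_⟩, ?_⟩
  · rw [pow_add, Equiv.Perm.mul_apply, hsteps.1.2, pow_nu_apply_foot]
  · rintro m ⟨hle, hm⟩
    have hsplit : (σ ^ (m - nn σ T τ)) (sigbar σ T τ) = γ := by
      rw [sigbar, ← Equiv.Perm.mul_apply, ← pow_add, Nat.sub_add_cancel hle, hm]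
    have hnu : nu σ T γ ≤ m - nn σ T τ :=
      nu_le_of_pow_apply_eq (fun hmem => sigbar_notMem_tilde horbit (subset_tilde hmem)) hsplit
    have hpos := nn_pos horbit
    have := hsteps.2 ⟨by lia, pow_sub_nu_apply_eq_foot (by lia) hm⟩
    lia

theorem nn_add_steps0_sigbar (hT : tilde σ T = T) (h : ¬ orbit σ τ ⊆ T)
    (hγ : γ ∈ orbit σ τ) :
    nn σ T τ + steps0 σ (sigbar σ T τ) γ = nu σ T γ + steps σ τ (foot σ T γ) := by
  have hγ' : γ ∈ orbit σ (sigbar σ T τ) := by rwa [orbit_eq_of_mem sigbar_mem_orbit]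
  exact (isLeast_add_steps0 _ hγ').unique (isLeast_nu_add_steps_foot hT h hγ)

theorem odd_nn (hT : tilde σ T = T) (hβ : β ∉ T) : Odd (nn σ T β) := by
  have hβT : β ∉ tilde σ T := hT.symm ▸ hβ
  have horbit := not_orbit_subset_of_notMem (σ := σ) hβT
  have hpos := nn_pos horbit
  by_contra hodd
  have htwo : 2 ≤ nn σ T β := by grind
  have hchain : IsChainIn σ T ((fun i => (σ ^ i) β) '' Set.Ioo 0 (nn σ T β)) :=
    isChainIn_pow_image_Ioo htwo hβ
      (fun i hi => hT.subset (pow_apply_mem_tilde_of_lt_nn hi.1 hi.2))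
      fun hmem => sigbar_notMem_tilde horbit (subset_tilde hmem)
  have hinj : Set.InjOn (fun i => (σ ^ i) β) (Set.Ioo 0 (nn σ T β)) := by
    simp only [← Equiv.Perm.iterate_eq_pow]
    exact Function.iterate_injOn_Iio_minimalPeriod.mono fun i hi =>
      hi.2.trans_le (nn_le_minimalPeriod hβT)
  have hcard : Odd ((fun i => (σ ^ i) β) '' Set.Ioo 0 (nn σ T β)).ncard := by
    rw [hinj.ncard_image, Set.ncard_eq_toFinset_card', Set.toFinset_Ioo, Nat.card_Ioo]
    grind
  exact hβT (image_inv_subset_tilde_of_odd_ncard hchain hcard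
    ⟨σ β, ⟨1, ⟨one_pos, htwo⟩, by simp only [pow_one]⟩, σ.symm_apply_apply β⟩)

theorem epsT_eq_neg_one_pow_nu (hT : tilde σ T = T) (h : ¬ orbit σ β ⊆ T) :
    epsT σ T β = (-1) ^ nu σ T β := by
  rw [epsT, if_neg h, hT, mu_eq_nn hT h]
  split_ifs with hβ
  · have hodd : Odd (nu σ T β + nn σ T β) :=
      nn_foot (hT.symm ▸ h) ▸ odd_nn hT (foot_notMem h)
    have hpos : 0 < nn σ T β := nn_pos (hT.symm ▸ h)
    rw [neg_one_pow_congr]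
    grind
  · have hnu : nu σ T β = 0 := Nat.le_zero.1 (nu_le_of_pow_apply_eq hβ rfl)
    rw [hnu, pow_zero]

end TildeEqSelf

section Functionals

variable [Fintype B] (p : ℕ) (κ : B → ℚ)

theorem Lfun1_eq_sum_orbit (ε : B → ℚ) :
    Lfun1 σ p ε β κ =
      ∑ γ ∈ (orbit σ β).toFinset, ε γ * (p : ℚ) ^ steps0 σ β γ * κ γ := by
  have hβ : β ∈ Function.periodicPts σ := σ.injective.mem_periodicPts β
  have hpos := Function.minimalPeriod_pos_of_mem_periodicPts hβ
  have hinv : σ⁻¹ β = (σ ^ (Function.minimalPeriod σ β - 1)) β := by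
    rw [Equiv.Perm.inv_eq_iff_eq, ← Equiv.Perm.mul_apply, ← pow_succ', Nat.sub_add_cancel hpos,
      ← Equiv.Perm.iterate_eq_pow, Function.iterate_minimalPeriod]
  have hlength : steps0 σ β (σ⁻¹ β) + 1 = Function.minimalPeriod σ β := by
    rw [hinv, steps0_pow_apply (Nat.sub_one_lt_of_lt hpos), Nat.sub_one_add_one hpos.ne']
  have horbit : ((orbit σ β).toFinset : Set B) = Set.range fun n => σ^[n] β := by
    rw [Set.coe_toFinset]
    simp only [Equiv.Perm.iterate_eq_pow]
    rfl
  rw [← sum_range_minimalPeriod_iterate hβ horbit, Lfun1, Lfun, hlength]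
  refine Finset.sum_congr rfl fun i hi => ?_
  rw [Equiv.Perm.iterate_eq_pow, steps0_pow_apply (Finset.mem_range.1 hi)]

theorem pow_nn_mul_LT (hT : tilde σ T = T) (hτ : τ ∉ T) :
    (p : ℚ) ^ nn σ T τ * LT σ p T τ κ =
      ∑ γ ∈ (orbit σ τ).toFinset,
        (p : ℚ) ^ steps σ τ (foot σ T γ) * ((-(p : ℚ)) ^ nu σ T γ * κ γ) := by
  have horbit : ¬ orbit σ τ ⊆ T := not_orbit_subset_of_notMem hτ
  have hLT : LT σ p T τ κ = Lfun1 σ p (epsT σ T) (sigbar σ T τ) κ := by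
    rw [LT, hT, if_neg hτ, mu_eq_nn hT horbit, sigbar]
  simp only [hLT, Lfun1_eq_sum_orbit, orbit_eq_of_mem sigbar_mem_orbit, Finset.mul_sum]
  refine Finset.sum_congr rfl fun γ hγ => ?_
  have hγτ : γ ∈ orbit σ τ := Set.mem_toFinset.1 hγ
  calc (p : ℚ) ^ nn σ T τ * (epsT σ T γ * (p : ℚ) ^ steps0 σ (sigbar σ T τ) γ * κ γ)
      = epsT σ T γ * (p : ℚ) ^ (nn σ T τ + steps0 σ (sigbar σ T τ) γ) * κ γ := by ring
    _ = (-1) ^ nu σ T γ * (p : ℚ) ^ (nu σ T γ + steps σ τ (foot σ T γ)) * κ γ := by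
      rw [epsT_eq_neg_one_pow_nu hT (orbit_eq_of_mem hγτ ▸ horbit),
        nn_add_steps0_sigbar hT horbit hγτ]
    _ = (p : ℚ) ^ steps σ τ (foot σ T γ) * ((-(p : ℚ)) ^ nu σ T γ * κ γ) := by
      rw [neg_pow (p : ℚ)]
      ring

variable [DecidableEq B]

theorem iT_apply (β : {β : B // β ∉ T}) :
    iT σ p T κ β = ∑ γ with foot σ T γ = β, (-(p : ℚ)) ^ nu σ T γ * κ γ := by
  rw [Finset.sum_filter]
  refine Finset.sum_congr rfl fun γ _ => ?_
  rw [← foot]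
  by_cases hγ : foot σ T γ = β
  · have horbit : ¬ orbit σ γ ⊆ T := fun hsub => β.2 (hγ ▸ hsub foot_mem_orbit)
    rw [if_neg horbit, if_pos hγ, if_pos hγ, mul_comm]
  · rw [if_neg hγ, if_neg hγ, ite_self, mul_zero]

theorem sum_mul_iT (h : ¬ orbit σ τ ⊆ T) (c : B → ℚ) :
    ∑ β ∈ (orbit σ τ \ T).toFinset, c β * (if h : β ∉ T then iT σ p T κ ⟨β, h⟩ else 0) =
      ∑ γ ∈ (orbit σ τ).toFinset, c (foot σ T γ) * ((-(p : ℚ)) ^ nu σ T γ * κ γ) := by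
  have hfoot : ∀ γ ∈ (orbit σ τ).toFinset, foot σ T γ ∈ (orbit σ τ \ T).toFinset := by
    simp only [Set.mem_toFinset]
    exact fun γ hγ => ⟨orbit_eq_of_mem hγ ▸ foot_mem_orbit,
      foot_notMem (orbit_eq_of_mem hγ ▸ h)⟩
  rw [← Finset.sum_fiberwise_of_maps_to hfoot]
  refine Finset.sum_congr rfl fun β hβ => ?_
  obtain ⟨hβτ, hβT⟩ := Set.mem_toFinset.1 hβ
  have hfibre : ({γ | foot σ T γ = β} : Finset B) =
      {γ ∈ (orbit σ τ).toFinset | foot σ T γ = β} := by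
    ext γ
    simp only [Finset.mem_filter, Finset.mem_univ, true_and, Set.mem_toFinset, iff_and_self]
    rintro rfl
    exact orbit_eq_of_mem hβτ ▸ mem_orbit_foot
  rw [dif_pos hβT, iT_apply, hfibre, Finset.mul_sum]
  refine Finset.sum_congr rfl fun γ hγ => ?_
  rw [(Finset.mem_filter.1 hγ).2]

end Functionals

end GO

theorem statement16_general {B : Type*} [Fintype B] [DecidableEq B]
    (σ : Equiv.Perm B) (p : ℕ) (T : Set B)
    (hT : GO.tilde σ T = T) (τ : B) (hτ : τ ∉ T) :
    Set.BijOn (GO.sigbar σ T) (GO.orbit σ τ \ T) (GO.orbit σ τ \ T) ∧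
    ∀ κ : B → ℚ,
      (p : ℚ) ^ GO.steps σ τ ((GO.sigbar σ T)^[1] τ) * GO.LT σ p T τ κ =
      ∑ i ∈ Finset.Icc 1 ((GO.orbit σ τ \ T).ncard),
        (p : ℚ) ^ GO.steps σ τ ((GO.sigbar σ T)^[i] τ) *
          (if h : (GO.sigbar σ T)^[i] τ ∉ T
           then GO.iT σ p T κ ⟨(GO.sigbar σ T)^[i] τ, h⟩ else 0) := by
  have hτ' : τ ∉ GO.tilde σ T := hT.symm ▸ hτ
  have horbit := GO.not_orbit_subset_of_notMem (σ := σ) hτ'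
  have hsum := GO.sum_Icc_ncard_iterate_sigbar (M := ℚ) hτ'
  have hbij := GO.bijOn_sigbar (σ := σ) (T := T) (τ := τ)
  simp only [hT] at hsum hbij
  refine ⟨hbij, fun κ => ?_⟩
  rw [Function.iterate_one, GO.steps_sigbar horbit, GO.pow_nn_mul_LT p κ hT hτ,
    hsum fun β => (p : ℚ) ^ GO.steps σ τ β * (if h : β ∉ T then GO.iT σ p T κ ⟨β, h⟩ else 0),
    GO.sum_mul_iT p κ (GO.not_orbit_subset_of_notMem hτ)]

/-- suppose `T̃ = T`, let `τ ∈ 𝔹_𝔭 − T_𝔭` and `s = |𝔹_𝔭 − T_𝔭|`.  Then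
`σ̄ : β ↦ σ^{n_β}β` permutes `𝔹_𝔭 − T_𝔭`, and, with `n_i(τ)` the unique
`0 < n ≤ |𝔹_𝔭|` such that `σ̄^iτ = σ^n τ`, for every `κ`, writing `ℓ = i_T(κ)`,
`p^{n₁(τ)} L_{T,τ}(κ) = Σ_{i=1}^{s} p^{n_i(τ)} ℓ_{σ̄^iτ}`. -/
theorem statement16 {B : Type*} [Fintype B] [DecidableEq B] [Nonempty B]
    (σ : Equiv.Perm B) (p : ℕ) (hp : p.Prime) (T : Set B)
    (hT : GO.tilde σ T = T) (τ : B) (hτ : τ ∉ T) :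
    Set.BijOn (GO.sigbar σ T) (GO.orbit σ τ \ T) (GO.orbit σ τ \ T) ∧
    ∀ κ : B → ℚ,
      (p : ℚ) ^ GO.steps σ τ ((GO.sigbar σ T)^[1] τ) * GO.LT σ p T τ κ =
      ∑ i ∈ Finset.Icc 1 ((GO.orbit σ τ \ T).ncard),
        (p : ℚ) ^ GO.steps σ τ ((GO.sigbar σ T)^[i] τ) *
          (if h : (GO.sigbar σ T)^[i] τ ∉ T
           then GO.iT σ p T κ ⟨(GO.sigbar σ T)^[i] τ, h⟩ else 0) :=
  statement16_general σ p T hT τ hτ
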